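/- arXiv:2009.07305 — 3 statements merged into one kernel-verified Lean document; each statement's English description precedes it below -/
import Mathlib

section
/- If T and T* are finite trees, each with at least 3 vertices, then the general position number of their Cartesian product satisfies gp(T □ T*) = gp(T) + gp(T*). -/
open SimpleGraph

/-- A set `S` of vertices of `G` is a general position set if for every three
pairwise-distinct vertices `x, y, z ∈ S` one has `d(x,y) ≠ d(x,z) + d(z,y)`. -/
def IsGenPosSet {V : Type*} (G : SimpleGraph V) (S : Set V) : Prop :=
  ∀ x ∈ S, ∀ y ∈ S, ∀ z ∈ S, x ≠ y → x ≠ z → y ≠ z →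
    G.dist x y ≠ G.dist x z + G.dist z y

/-- The general position number of a graph on a finite vertex type: the
cardinality of a largest general position set. -/
noncomputable def genPosNum {V : Type*} [Fintype V] (G : SimpleGraph V) : ℕ :=
  sSup {n | ∃ S : Finset V, IsGenPosSet G ↑S ∧ S.card = n}

/-- A vertex is a leaf if it has exactly one neighbour (degree 1). -/
def IsLeaf {V : Type*} (G : SimpleGraph V) (v : V) : Prop :=
  ∃! w, G.Adj v w

/-!
For `S ⊆ V(G) × V(H)` and `z ∈ S`, consider the two relations on `S \ {z}` saying that the first,
respectively the second, coordinate of `z` is not on a geodesic between those of `x` and `y`. The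
general position of `S` says that any two elements are related by one of them, and thinness of
geodesic triangles says that both are transitive. Two symmetric transitive relations cannot cover
all pairs unless one of them already does, so `S` splits into a part projecting injectively to a
general position set of `G` and a part projecting likewise to one of `H`.

Conversely, if a largest general position set of `G` contains two nonadjacent vertices, then an
inner vertex `u` of a geodesic between them sees its elements without obstruction. Choosing `w` in
`H` in the same way, the cross `S × {w} ∪ {u} × R` is in general position. If a largest general
position set is a clique and `v` is outside it, then by maximality and thinness `v` is at distance
at least two from all but one of its elements; exchanging that element for `v` produces the
nonadjacent pair.
-/

/-- The geodesic interval between `x` and `y`: the vertices on shortest paths from `x` to `y`, if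
`G` is connected. -/
def geodInterval {V : Type*} (G : SimpleGraph V) (x y : V) : Set V :=
  {z | G.dist x y = G.dist x z + G.dist z y}

/-- Each side of a geodesic triangle is covered by the other two sides. The connected graphs with
this property are the block graphs, those whose blocks are all complete. -/
def HasThinTriangles {V : Type*} (G : SimpleGraph V) : Prop :=
  ∀ x y w, geodInterval G x y ⊆ geodInterval G x w ∪ geodInterval G w y

/-- The member with index `z` of the family `f` on `A` is geodesically extreme: it is in no
geodesic interval between members with other indices. These two indices may coincide, so that
`f z` has to differ from all other members. -/
def IsGeodExtreme {ι V : Type*} (G : SimpleGraph V) (f : ι → V) (A : Set ι) (z : ι) : Prop :=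
  ∀ x ∈ A, ∀ y ∈ A, x ≠ z → y ≠ z → f z ∉ geodInterval G (f x) (f y)

/-- A vertex outside `S` that may be added to `S` so that the elements of `S` remain
geodesically extreme; it may itself be between elements of `S`. -/
def IsHub {V : Type*} (G : SimpleGraph V) (S : Set V) (u : V) : Prop :=
  u ∉ S ∧ ∀ s ∈ S, IsGeodExtreme G id (insert u S) s

theorem forall_or_forall_of_symm_of_isTrans {α : Type*} {r s : α → α → Prop}
    [Std.Symm r] [IsTrans α r] [Std.Symm s] [IsTrans α s] (h : ∀ x y, r x y ∨ s x y) :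
    (∀ x y, r x y) ∨ ∀ x y, s x y := by
  by_contra! ⟨⟨a, b, hab⟩, c, d, hcd⟩
  have to_a (x : α) : s x a := by
    by_contra hxa
    have hrxa : r x a := (h x a).resolve_right hxa
    have hsxb : s x b := (h x b).resolve_left fun hrxb => hab (_root_.trans (symm hrxa) hrxb)
    have hsab : s a b := (h a b).resolve_left hab
    exact hxa (_root_.trans hsxb (symm hsab))
  exact hcd (_root_.trans (to_a c) (symm (to_a d)))

section Interval

variable {V W : Type*} {G : SimpleGraph V} {H : SimpleGraph W}

theorem mem_geodInterval {x y z : V} :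
    z ∈ geodInterval G x y ↔ G.dist x y = G.dist x z + G.dist z y :=
  Iff.rfl

theorem mem_geodInterval_comm {x y z : V} :
    z ∈ geodInterval G x y ↔ z ∈ geodInterval G y x := by
  rw [mem_geodInterval, mem_geodInterval, G.dist_comm (u := x) (v := y),
    G.dist_comm (u := x) (v := z), G.dist_comm (u := z) (v := y), add_comm]

theorem geodInterval_self (hG : G.Connected) (x : V) : geodInterval G x x = {x} := by
  ext z
  rw [mem_geodInterval, Set.mem_singleton_iff, ← hG.dist_eq_zero_iff, G.dist_comm (u := x) (v := z),
    SimpleGraph.dist_self]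
  lia

theorem eq_of_mem_geodInterval_of_mem_geodInterval (hG : G.Connected) {x y z : V}
    (hx : x ∈ geodInterval G y z) (hy : y ∈ geodInterval G x z) : x = y := by
  rw [mem_geodInterval] at hx hy
  exact hG.dist_eq_zero_iff.1 (by lia)

theorem dist_boxProd (hG : G.Connected) (hH : H.Connected) (x y : V × W) :
    (G □ H).dist x y = G.dist x.1 y.1 + H.dist x.2 y.2 := by
  have h := edist_boxProd (G := G) (H := H) x y
  rw [← ((hG.boxProd hH) x y).coe_dist_eq_edist, ← (hG x.1 y.1).coe_dist_eq_edist,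
    ← (hH x.2 y.2).coe_dist_eq_edist] at h
  exact_mod_cast h

theorem geodInterval_boxProd (hG : G.Connected) (hH : H.Connected) (x y : V × W) :
    geodInterval (G □ H) x y = geodInterval G x.1 y.1 ×ˢ geodInterval H x.2 y.2 := by
  ext z
  simp only [Set.mem_prod, mem_geodInterval, dist_boxProd hG hH]
  have := hG.dist_triangle (u := x.1) (v := z.1) (w := y.1)
  have := hH.dist_triangle (u := x.2) (v := z.2) (w := y.2)
  lia

theorem exists_mem_geodInterval_of_not_adj (hG : G.Connected) {x y : V} (hne : x ≠ y)
    (hadj : ¬ G.Adj x y) : ∃ u ∈ geodInterval G x y, u ≠ x ∧ u ≠ y := by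
  obtain ⟨p, hp⟩ := hG.exists_walk_length_eq_dist x y
  cases p with
  | nil => exact absurd rfl hne
  | @cons _ u _ hxu q =>
    refine ⟨u, ?_, hxu.ne', fun h => hadj (h ▸ hxu)⟩
    have hdist : G.dist x u = 1 := dist_eq_one_iff_adj.2 hxu
    have hq : G.dist u y ≤ q.length := dist_le q
    have := hG.dist_triangle (u := x) (v := u) (w := y)
    rw [Walk.length_cons] at hp
    rw [mem_geodInterval]
    lia

theorem mem_geodInterval_of_mem_support {x y z : V} {p : G.Walk x y}
    (hp : p.length = G.dist x y) (hz : z ∈ p.support) : z ∈ geodInterval G x y := by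
  classical
  rw [mem_geodInterval, ← hp, ← length_eq_dist_of_subwalk hp (p.isSubwalk_takeUntil hz),
    ← length_eq_dist_of_subwalk hp (p.isSubwalk_dropUntil hz), ← Walk.length_append,
    p.take_spec hz]

theorem mem_support_of_mem_geodInterval (hG : G.IsTree) {x y z : V}
    (hz : z ∈ geodInterval G x y) (p : G.Walk x y) : z ∈ p.support := by
  classical
  obtain ⟨q, hq⟩ := hG.1.exists_walk_length_eq_dist x z
  obtain ⟨r, hr⟩ := hG.1.exists_walk_length_eq_dist z y
  have hqr : (q.append r).IsPath := Walk.isPath_of_length_eq_dist _ (by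
    rw [Walk.length_append, hq, hr, mem_geodInterval.1 hz])
  have hp : p.bypass = q.append r := congrArg Subtype.val
    ((hG.2.subsingleton_path x y).elim ⟨_, p.bypass_isPath⟩ ⟨_, hqr⟩)
  apply p.support_bypass_subset_support
  rw [hp]
  exact (Walk.mem_support_append_iff _ _).2 (.inl q.end_mem_support)

theorem hasThinTriangles_of_isTree (hG : G.IsTree) : HasThinTriangles G := by
  intro x y w z hz
  obtain ⟨p, hp⟩ := hG.1.exists_walk_length_eq_dist x w
  obtain ⟨q, hq⟩ := hG.1.exists_walk_length_eq_dist w y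
  have hzpq := mem_support_of_mem_geodInterval hG hz (p.append q)
  exact ((Walk.mem_support_append_iff p q).1 hzpq).imp
    (mem_geodInterval_of_mem_support hp) (mem_geodInterval_of_mem_support hq)

theorem ne_top_of_isAcyclic [Fintype V] (hG : G.IsAcyclic) (hV : 3 ≤ Fintype.card V) :
    G ≠ ⊤ := by
  rintro rfl
  obtain ⟨s, -, hs⟩ := Finset.exists_subset_card_eq (s := Finset.univ) hV
  exact hG.cliqueFree le_rfl s ⟨fun _ _ _ _ h => h, hs⟩

end Interval

section GeneralPosition

variable {V W : Type*} {G : SimpleGraph V} {H : SimpleGraph W}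

theorem isGenPosSet_iff_forall_isGeodExtreme (hG : G.Connected) {S : Set V} :
    IsGenPosSet G S ↔ ∀ z ∈ S, IsGeodExtreme G id S z := by
  refine ⟨fun hS z hz x hx y hy hxz hyz h => ?_, fun hS x hx y hy z hz _ => hS z hz x hx y hy⟩
  rcases eq_or_ne x y with rfl | hxy
  · rw [geodInterval_self hG] at h
    exact hxz h.symm
  · exact hS x hx y hy z hz hxy hxz hyz h

theorem isGenPosSet_boxProd_of_forall (hG : G.Connected) (hH : H.Connected) {S : Set (V × W)}
    (hS : ∀ z ∈ S, IsGeodExtreme G Prod.fst S z ∨ IsGeodExtreme H Prod.snd S z) :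
    IsGenPosSet (G □ H) S := by
  rw [isGenPosSet_iff_forall_isGeodExtreme (hG.boxProd hH)]
  intro z hz x hx y hy hxz hyz h
  rw [geodInterval_boxProd hG hH] at h
  rcases hS z hz with hext | hext
  · exact hext x hx y hy hxz hyz h.1
  · exact hext x hx y hy hxz hyz h.2

theorem IsGenPosSet.isGeodExtreme_fst_or_snd (hG : G.Connected) (hH : H.Connected)
    (hGthin : HasThinTriangles G) (hHthin : HasThinTriangles H) {S : Set (V × W)}
    (hS : IsGenPosSet (G □ H) S) {z : V × W} (hz : z ∈ S) :
    IsGeodExtreme G Prod.fst S z ∨ IsGeodExtreme H Prod.snd S z := by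
  let r (x y : {x // x ∈ S ∧ x ≠ z}) : Prop := z.1 ∉ geodInterval G x.1.1 y.1.1
  let s (x y : {x // x ∈ S ∧ x ≠ z}) : Prop := z.2 ∉ geodInterval H x.1.2 y.1.2
  have : Std.Symm r := ⟨fun _ _ => mt mem_geodInterval_comm.1⟩
  have : Std.Symm s := ⟨fun _ _ => mt mem_geodInterval_comm.1⟩
  have : IsTrans _ r := ⟨fun x y v hxy hyv h => (hGthin _ _ y.1.1 h).elim hxy hyv⟩
  have : IsTrans _ s := ⟨fun x y v hxy hyv h => (hHthin _ _ y.1.2 h).elim hxy hyv⟩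
  have hcover (x y : {x // x ∈ S ∧ x ≠ z}) : r x y ∨ s x y := by
    have hxy := (isGenPosSet_iff_forall_isGeodExtreme (hG.boxProd hH)).1 hS z hz
      x x.2.1 y y.2.1 x.2.2 y.2.2
    rwa [id, id, id, geodInterval_boxProd hG hH, Set.mem_prod, not_and_or] at hxy
  exact (forall_or_forall_of_symm_of_isTrans hcover).imp
    (fun h x hx y hy hxz hyz => h ⟨x, hx, hxz⟩ ⟨y, hy, hyz⟩)
    (fun h x hx y hy hxz hyz => h ⟨x, hx, hxz⟩ ⟨y, hy, hyz⟩)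

theorem exists_isHub (hG : G.Connected) (hGthin : HasThinTriangles G) {S : Set V}
    (hS : IsGenPosSet G S) {x y : V} (hx : x ∈ S) (hy : y ∈ S) (hne : x ≠ y)
    (hadj : ¬ G.Adj x y) : ∃ u, IsHub G S u := by
  obtain ⟨u, hu, hux, huy⟩ := exists_mem_geodInterval_of_not_adj hG hne hadj
  have huS : u ∉ S := fun h => hS x hx y hy u h hne hux.symm huy.symm hu
  rw [isGenPosSet_iff_forall_isGeodExtreme hG] at hS
  have hsees (s : V) (hs : s ∈ S) (t : V) (ht : t ∈ S) (hts : t ≠ s) :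
      s ∉ geodInterval G u t := by
    intro hsut
    have hus : u ≠ s := fun h => huS (h ▸ hs)
    obtain ⟨v, hv, huv⟩ : ∃ v ∈ S, u ∈ geodInterval G s v := by
      rcases hGthin x y s hu with h | h
      · exact ⟨x, hx, mem_geodInterval_comm.1 h⟩
      · exact ⟨y, hy, h⟩
    have hvs : v ≠ s := by
      rintro rfl
      rw [geodInterval_self hG] at huv
      exact hus huv
    rcases hGthin u t v hsut with h | h
    · exact hus (eq_of_mem_geodInterval_of_mem_geodInterval hG huv h)
    · exact hS s hs v hv t ht hvs hts h
  refine ⟨u, huS, fun s hs a ha b hb has hbs => ?_⟩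
  rcases ha with rfl | ha <;> rcases hb with rfl | hb
  · rw [geodInterval_self hG]
    exact has.symm
  · exact hsees s hs b hb hbs
  · exact mt mem_geodInterval_comm.1 (hsees s hs a ha has)
  · exact hS s hs a ha b hb has hbs

theorem IsHub.isGenPosSet_cross (hG : G.Connected) (hH : H.Connected) {S : Set V} {R : Set W}
    {u : V} {w : W} (hu : IsHub G S u) (hw : IsHub H R w) :
    IsGenPosSet (G □ H) (S ×ˢ {w} ∪ {u} ×ˢ R) := by
  refine isGenPosSet_boxProd_of_forall hG hH ?_
  rintro ⟨s, r⟩ (⟨hs, rfl⟩ | ⟨rfl, hr⟩)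
  · have hfst : ∀ x ∈ S ×ˢ {r} ∪ {u} ×ˢ R, x ≠ (s, r) → x.1 ∈ insert u S ∧ x.1 ≠ s := by
      rintro ⟨a, b⟩ (⟨ha, rfl⟩ | ⟨rfl, -⟩) hne
      · exact ⟨.inr ha, fun h => hne (Prod.ext h rfl)⟩
      · exact ⟨.inl rfl, fun h => hu.1 (h ▸ hs)⟩
    exact .inl fun x hx y hy hxz hyz => hu.2 s hs x.1 (hfst x hx hxz).1 y.1 (hfst y hy hyz).1
      (hfst x hx hxz).2 (hfst y hy hyz).2
  · have hsnd : ∀ x ∈ S ×ˢ {w} ∪ {s} ×ˢ R, x ≠ (s, r) → x.2 ∈ insert w R ∧ x.2 ≠ r := by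
      rintro ⟨a, b⟩ (⟨-, rfl⟩ | ⟨rfl, hb⟩) hne
      · exact ⟨.inl rfl, fun h => hw.1 (h ▸ hr)⟩
      · exact ⟨.inr hb, fun h => hne (Prod.ext rfl h)⟩
    exact .inr fun x hx y hy hxz hyz => hw.2 r hr x.2 (hsnd x hx hxz).1 y.2 (hsnd y hy hyz).1
      (hsnd x hx hxz).2 (hsnd y hy hyz).2

theorem isGenPosSet_insert_of_isClique {K : Set V} {v : V} {n : ℕ} (hK : G.IsClique K)
    (hv : ∀ x ∈ K, G.dist v x = n) : IsGenPosSet G (insert v K) := by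
  have hdist (x y : V) (hx : x ∈ K) (hy : y ∈ K) (hne : x ≠ y) : G.dist x y = 1 :=
    dist_eq_one_iff_adj.2 (hK hx hy hne)
  have hv' (x : V) (hx : x ∈ K) : G.dist x v = n := by rw [dist_comm, hv x hx]
  intro x hx y hy z hz hxy hxz hyz h
  -- By position of `v` among the three points, `h` reads `1 = 1 + 1`, `n = n + 1` or `1 = n + n`.
  grind

theorem exists_mem_geodInterval_of_not_isGenPosSet_insert (hG : G.Connected) {K : Set V} {v : V}
    (hK : G.IsClique K) (hv : v ∉ K) (h : ¬ IsGenPosSet G (insert v K)) :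
    ∃ s ∈ K, ∃ t ∈ K, s ≠ t ∧ s ∈ geodInterval G v t := by
  have hdist (x y : V) (hx : x ∈ K) (hy : y ∈ K) (hne : x ≠ y) : G.dist x y = 1 :=
    dist_eq_one_iff_adj.2 (hK hx hy hne)
  have hpos (x : V) (hx : x ∈ K) : 0 < G.dist x v := hG.pos_dist_of_ne fun h => hv (h ▸ hx)
  simp only [IsGenPosSet, not_forall, not_not] at h
  obtain ⟨x, hx, y, hy, z, hz, hxy, hxz, hyz, h⟩ := h
  rcases hz with rfl | hz
  · have hxK : x ∈ K := hx.resolve_left hxz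
    have hyK : y ∈ K := hy.resolve_left hyz
    have := hpos x hxK
    have := hpos y hyK
    rw [hdist x y hxK hyK hxy, G.dist_comm (u := z) (v := y)] at h
    lia
  rcases hx with rfl | hx
  · exact ⟨z, hz, y, hy.resolve_left hxy.symm, hyz.symm, h⟩
  rcases hy with rfl | hy
  · exact ⟨z, hz, x, hx, hxz.symm, mem_geodInterval_comm.1 h⟩
  · rw [hdist x y hx hy hxy, hdist x z hx hz hxz, hdist z y hz hy hyz.symm] at h
    lia

theorem isGenPosSet_insert_diff_of_isClique (hGthin : HasThinTriangles G) {K : Set V} {v s t : V}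
    (hK : G.IsClique K) (hs : s ∈ K) (ht : t ∈ K) (hst : s ≠ t)
    (hmem : s ∈ geodInterval G v t) : IsGenPosSet G (insert v (K \ {s})) := by
  refine isGenPosSet_insert_of_isClique (n := G.dist v s + 1) (hK.subset Set.sdiff_subset) ?_
  rintro x ⟨hx, hxs⟩
  have hsx : G.dist s x = 1 := dist_eq_one_iff_adj.2 (hK hs hx (Ne.symm hxs))
  suffices h : s ∈ geodInterval G v x by rw [mem_geodInterval.1 h, hsx]
  refine (hGthin v t x hmem).resolve_right fun h => ?_
  rw [mem_geodInterval, G.dist_comm (u := x) (v := s), hsx,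
    dist_eq_one_iff_adj.2 (hK hs ht hst)] at h
  rcases eq_or_ne x t with rfl | hxt
  · rw [SimpleGraph.dist_self] at h
    lia
  · rw [dist_eq_one_iff_adj.2 (hK hx ht hxt)] at h
    lia

end GeneralPosition

section GenPosNum

theorem bddAbove_card_isGenPosSet {V : Type*} [Finite V] (G : SimpleGraph V) :
    BddAbove {n | ∃ S : Finset V, IsGenPosSet G ↑S ∧ S.card = n} := by
  have := Fintype.ofFinite V
  exact ⟨Fintype.card V, by rintro _ ⟨S, -, rfl⟩; exact S.card_le_univ⟩

variable {V W : Type*} [Fintype V] [Fintype W] {G : SimpleGraph V} {H : SimpleGraph W}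

theorem IsGenPosSet.card_le_genPosNum {S : Finset V} (hS : IsGenPosSet G ↑S) :
    S.card ≤ genPosNum G :=
  le_csSup (bddAbove_card_isGenPosSet G) ⟨S, hS, rfl⟩

theorem exists_isGenPosSet_card_eq_genPosNum (G : SimpleGraph V) :
    ∃ S : Finset V, IsGenPosSet G ↑S ∧ S.card = genPosNum G :=
  Nat.sSup_mem (s := {n | ∃ S : Finset V, IsGenPosSet G ↑S ∧ S.card = n})
    ⟨0, ∅, by simp [IsGenPosSet], rfl⟩ (bddAbove_card_isGenPosSet G)

theorem card_le_genPosNum_of_forall_isGeodExtreme {ι : Type*} {f : ι → V} {A : Finset ι}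
    (hA : ∀ z ∈ A, IsGeodExtreme G f A z) : A.card ≤ genPosNum G := by
  classical
  have hinj : Set.InjOn f A := by
    intro x hx z hz hxz
    by_contra hne
    exact hA z hz x hx x hx hne hne (by simp [mem_geodInterval, hxz])
  have himage : IsGenPosSet G ↑(A.image f) := by
    rw [Finset.coe_image]
    rintro _ ⟨x, hx, rfl⟩ _ ⟨y, hy, rfl⟩ _ ⟨z, hz, rfl⟩ - hxz hyz
    exact hA z hz x hx y hy (ne_of_apply_ne f hxz) (ne_of_apply_ne f hyz)
  exact Finset.card_image_of_injOn hinj ▸ himage.card_le_genPosNum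

theorem genPosNum_boxProd_le_add (hG : G.Connected) (hH : H.Connected)
    (hGthin : HasThinTriangles G) (hHthin : HasThinTriangles H) :
    genPosNum (G □ H) ≤ genPosNum G + genPosNum H := by
  classical
  obtain ⟨S, hS, hcard⟩ := exists_isGenPosSet_card_eq_genPosNum (G □ H)
  rw [← hcard, ← S.card_filter_add_card_filter_not (IsGeodExtreme G Prod.fst S)]
  refine Nat.add_le_add (card_le_genPosNum_of_forall_isGeodExtreme (f := Prod.fst) ?_)
    (card_le_genPosNum_of_forall_isGeodExtreme (f := Prod.snd) ?_) <;>
    intro z hz x hx y hy <;> rw [Finset.mem_coe, Finset.mem_filter] at hx hy <;>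
    rw [Finset.mem_filter] at hz
  · exact hz.2 x hx.1 y hy.1
  · exact (hS.isGeodExtreme_fst_or_snd hG hH hGthin hHthin hz.1).resolve_left hz.2 x hx.1 y hy.1

theorem exists_isGenPosSet_card_eq_genPosNum_not_isClique (hG : G.Connected)
    (hGthin : HasThinTriangles G) (hne : G ≠ ⊤) :
    ∃ S : Finset V, IsGenPosSet G ↑S ∧ S.card = genPosNum G ∧ ¬ G.IsClique (S : Set V) := by
  classical
  obtain ⟨S, hS, hcard⟩ := exists_isGenPosSet_card_eq_genPosNum G
  by_cases hclique : G.IsClique (S : Set V)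
  swap
  · exact ⟨S, hS, hcard, hclique⟩
  obtain ⟨v, hv⟩ : ∃ v, v ∉ S := by
    by_contra! h
    exact hne (isClique_univ.1 (hclique.subset fun v _ => h v))
  have hmax : ¬ IsGenPosSet G (insert v (S : Set V)) := by
    intro h
    rw [← Finset.coe_insert] at h
    have := h.card_le_genPosNum
    rw [Finset.card_insert_of_notMem hv] at this
    lia
  obtain ⟨s, hs, t, ht, hst, hmem⟩ :=
    exists_mem_geodInterval_of_not_isGenPosSet_insert hG hclique hv hmax
  have hvs : v ≠ s := fun h => hv (h ▸ hs)
  have hvt : v ≠ t := fun h => hv (h ▸ ht)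
  refine ⟨insert v (S.erase s), ?_, ?_, fun h => ?_⟩
  · rw [Finset.coe_insert, Finset.coe_erase]
    exact isGenPosSet_insert_diff_of_isClique hGthin hclique hs ht hst hmem
  · rw [Finset.card_insert_of_notMem (fun h => hv (Finset.mem_of_mem_erase h)),
      Finset.card_erase_add_one hs, hcard]
  · have hadj : G.Adj v t := h (by simp) (by simpa [hst.symm] using .inr ht) hvt
    have := hG.pos_dist_of_ne hvs
    have := hG.pos_dist_of_ne hst
    rw [mem_geodInterval, dist_eq_one_iff_adj.2 hadj] at hmem
    lia

theorem exists_isHub_card_eq_genPosNum (hG : G.Connected) (hGthin : HasThinTriangles G)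
    (hne : G ≠ ⊤) : ∃ (S : Finset V) (u : V), S.card = genPosNum G ∧ IsHub G ↑S u := by
  obtain ⟨S, hS, hcard, hclique⟩ := exists_isGenPosSet_card_eq_genPosNum_not_isClique hG hGthin hne
  simp only [isClique_iff, Set.Pairwise, not_forall] at hclique
  obtain ⟨x, hx, y, hy, hxy, hadj⟩ := hclique
  obtain ⟨u, hu⟩ := exists_isHub hG hGthin hS hx hy hxy hadj
  exact ⟨S, u, hcard, hu⟩

theorem genPosNum_add_le_boxProd (hG : G.Connected) (hH : H.Connected)
    (hGthin : HasThinTriangles G) (hHthin : HasThinTriangles H) (hGne : G ≠ ⊤) (hHne : H ≠ ⊤) :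
    genPosNum G + genPosNum H ≤ genPosNum (G □ H) := by
  classical
  obtain ⟨S, u, hScard, hu⟩ := exists_isHub_card_eq_genPosNum hG hGthin hGne
  obtain ⟨R, w, hRcard, hw⟩ := exists_isHub_card_eq_genPosNum hH hHthin hHne
  have hdisj : Disjoint (S ×ˢ {w}) ({u} ×ˢ R) :=
    Finset.disjoint_product.2 (.inl (Finset.disjoint_singleton_right.2 hu.1))
  have hcross : IsGenPosSet (G □ H) ↑(S ×ˢ {w} ∪ {u} ×ˢ R) := by
    push_cast
    exact hu.isGenPosSet_cross hG hH hw
  calc genPosNum G + genPosNum H = (S ×ˢ {w} ∪ {u} ×ˢ R).card := by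
        rw [Finset.card_union_of_disjoint hdisj, Finset.card_product, Finset.card_product,
          Finset.card_singleton, Finset.card_singleton, mul_one, one_mul, hScard, hRcard]
    _ ≤ genPosNum (G □ H) := hcross.card_le_genPosNum

theorem gp_boxProd_trees_general (hG : G.Connected) (hH : H.Connected)
    (hGthin : HasThinTriangles G) (hHthin : HasThinTriangles H) (hGne : G ≠ ⊤) (hHne : H ≠ ⊤) :
    genPosNum (G □ H) = genPosNum G + genPosNum H :=
  (genPosNum_boxProd_le_add hG hH hGthin hHthin).antisymm
    (genPosNum_add_le_boxProd hG hH hGthin hHthin hGne hHne)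

end GenPosNum

/-- If `T` and `T*` are finite trees, each with at least 3 vertices, then
`gp(T □ T*) = gp(T) + gp(T*)`. -/
theorem gp_boxProd_trees {V W : Type*} [Fintype V] [Fintype W]
    (T : SimpleGraph V) (T' : SimpleGraph W)
    (hT : T.IsTree) (hT' : T'.IsTree)
    (hV : 3 ≤ Fintype.card V) (hW : 3 ≤ Fintype.card W) :
    genPosNum (T □ T') = genPosNum T + genPosNum T' :=
  gp_boxProd_trees_general hT.1 hT'.1 (hasThinTriangles_of_isTree hT)
    (hasThinTriangles_of_isTree hT') (ne_top_of_isAcyclic hT.2 hV) (ne_top_of_isAcyclic hT'.2 hW)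
end

section
/- If T is a finite tree with at least 2 vertices, then gp(T) = ℓ(T), the number of leaves of T. -/
/-!
Leaves are never interior to a geodesic, so they form a general position set. Conversely, let `S` be
a general position set in a finite tree and `s ∈ S`. Since `s` does not separate two other elements
of `S`, all of `S \ {s}` lies in one branch at `s`; extending a geodesic from there through `s` as
far as possible ends at a leaf `l` that `s` separates from every other element of `S`. Such leaves
are distinct for distinct `s`: if `s` separates `t` from `l` and `t` separates `s` from `l`, then
`s = t`.
-/

open SimpleGraph

section Betweenness

variable {V : Type*} {G : SimpleGraph V}

/-- Metric betweenness: `y` lies on a geodesic of `G` from `x` to `z`, with the middle vertex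
written second as in `Wbtw`. General position sets are those in which no vertex is between two
others. The notion is meaningful within one component only, as `dist` is `0` between components. -/
def GeodesicBtw (G : SimpleGraph V) (x y z : V) : Prop :=
  G.dist x z = G.dist x y + G.dist y z

namespace GeodesicBtw

variable {w x y z : V}

lemma right (G : SimpleGraph V) (x y : V) : GeodesicBtw G x y y := by
  simp only [GeodesicBtw, dist_self, add_zero]

lemma symm (h : GeodesicBtw G x y z) : GeodesicBtw G z y x := by
  rw [GeodesicBtw, G.dist_comm (u := z) (v := x), G.dist_comm (u := z) (v := y),
    G.dist_comm (u := y) (v := x), add_comm, h]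

lemma trans_left (hG : G.Connected) (h₁ : GeodesicBtw G w y z) (h₂ : GeodesicBtw G w x y) :
    GeodesicBtw G w x z := by
  have hwz : G.dist w z ≤ G.dist w x + G.dist x z := hG.dist_triangle
  have hxz : G.dist x z ≤ G.dist x y + G.dist y z := hG.dist_triangle
  unfold GeodesicBtw at *
  omega

lemma eq_of_swap_left (hG : G.Connected) (h₁ : GeodesicBtw G x y z) (h₂ : GeodesicBtw G y x z) :
    x = y := by
  refine hG.dist_eq_zero_iff.mp ?_
  unfold GeodesicBtw at *
  omega

lemma of_mem_support {p : G.Walk x z} (hp : p.length = G.dist x z) (hy : y ∈ p.support) :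
    GeodesicBtw G x y z := by
  classical
  refine le_antisymm (Reachable.dist_triangle_left ⟨p.takeUntil y hy⟩ z) ?_
  calc
    G.dist x y + G.dist y z ≤ (p.takeUntil y hy).length + (p.dropUntil y hy).length :=
      add_le_add (dist_le _) (dist_le _)
    _ = G.dist x z := by rw [← Walk.length_append, p.take_spec hy, hp]

lemma mem_support (hG : G.IsTree) (h : GeodesicBtw G x y z) (p : G.Walk x z) :
    y ∈ p.support := by
  classical
  obtain ⟨q, hq⟩ := hG.connected.exists_walk_length_eq_dist x y
  obtain ⟨r, hr⟩ := hG.connected.exists_walk_length_eq_dist y z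
  have hqr : (q.append r).IsPath :=
    Walk.isPath_of_length_eq_dist _ (by rw [Walk.length_append, hq, hr, h])
  have hbypass : p.bypass = q.append r := (hG.existsUnique_path x z).unique p.bypass_isPath hqr
  refine p.support_bypass_subset_support ?_
  rw [hbypass, Walk.mem_support_append_iff]
  exact Or.inl q.end_mem_support

lemma left_or_right (hG : G.IsTree) (h : GeodesicBtw G x y z) (w : V) :
    GeodesicBtw G x y w ∨ GeodesicBtw G w y z := by
  obtain ⟨p, hp⟩ := hG.connected.exists_walk_length_eq_dist x w
  obtain ⟨q, hq⟩ := hG.connected.exists_walk_length_eq_dist w z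
  exact ((Walk.mem_support_append_iff p q).mp (h.mem_support hG _)).imp
    (of_mem_support hp) (of_mem_support hq)

lemma of_adj_of_adj (hG : G.IsAcyclic) (hxy : G.Adj x y) (hyz : G.Adj y z) (hxz : x ≠ z) :
    GeodesicBtw G x y z := by
  have hpos : 0 < G.dist x z := (hxy.reachable.trans hyz.reachable).pos_dist_of_ne hxz
  have hle : G.dist x z ≤ G.dist x y + G.dist y z := hxy.reachable.dist_triangle_left z
  have hne : G.dist x y ≠ G.dist x z := hG.dist_ne_of_adj hyz hxy.reachable
  rw [dist_eq_one_iff_adj.mpr hxy] at hne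
  rw [dist_eq_one_iff_adj.mpr hxy, dist_eq_one_iff_adj.mpr hyz] at hle
  rw [GeodesicBtw, dist_eq_one_iff_adj.mpr hxy, dist_eq_one_iff_adj.mpr hyz]
  omega

end GeodesicBtw

end Betweenness

section Leaves

variable {V : Type*} {G : SimpleGraph V}

namespace IsLeaf

variable {w x y z : V}

lemma dist_eq_dist_add_one (hz : IsLeaf G z) (hzw : G.Adj z w) (hzx : G.Reachable z x)
    (hne : z ≠ x) : G.dist z x = G.dist w x + 1 := by
  obtain ⟨p, hp⟩ := hzx.exists_walk_length_eq_dist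
  cases p with
  | nil => exact absurd rfl hne
  | cons hadj q =>
    obtain rfl := hz.unique hzw hadj
    have hq := dist_le q
    have htri := hzw.reachable.dist_triangle_left x
    rw [dist_eq_one_iff_adj.mpr hzw] at htri
    rw [Walk.length_cons] at hp
    omega

lemma not_geodesicBtw (hG : G.Connected) (hz : IsLeaf G z) (hxz : x ≠ z) (hyz : y ≠ z) :
    ¬GeodesicBtw G x z y := by
  obtain ⟨w, hzw⟩ := hz.exists
  have hx := hz.dist_eq_dist_add_one hzw (hG z x) hxz.symm
  have hy := hz.dist_eq_dist_add_one hzw (hG z y) hyz.symm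
  have htri : G.dist x y ≤ G.dist x w + G.dist w y := hG.dist_triangle
  rw [GeodesicBtw, G.dist_comm (u := x) (v := z)]
  rw [G.dist_comm (u := x) (v := w)] at htri
  omega

end IsLeaf

lemma exists_isLeaf_geodesicBtw [Finite V] [Nontrivial V] (hG : G.IsTree) (r s : V) :
    ∃ l, IsLeaf G l ∧ GeodesicBtw G r s l := by
  obtain ⟨l, hl, hmax⟩ := (Set.toFinite {v | GeodesicBtw G r s v}).exists_maximalFor
    (G.dist r) _ ⟨s, GeodesicBtw.right G r s⟩
  have hnot_beyond (v : V) (hv : G.Adj l v) : ¬GeodesicBtw G r l v := by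
    intro hlv
    have hdist : G.dist r v = G.dist r l + 1 := by rw [hlv, dist_eq_one_iff_adj.mpr hv]
    have hle : G.dist r v ≤ G.dist r l := hmax (hlv.trans_left hG.connected hl) (by omega)
    omega
  obtain ⟨w, hw⟩ := hG.connected.preconnected.exists_adj_of_nontrivial l
  refine ⟨l, ⟨w, hw, fun y hy ↦ ?_⟩, hl⟩
  by_contra hne
  have hbtw : GeodesicBtw G y l w := .of_adj_of_adj hG.isAcyclic hy.symm hw hne
  rcases hbtw.left_or_right hG r with h | h
  · exact hnot_beyond y hy h.symm
  · exact hnot_beyond w hw h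

end Leaves

section GeneralPosition

variable {V : Type*} {G : SimpleGraph V}

lemma isGenPosSet_setOf_isLeaf (hG : G.Connected) : IsGenPosSet G {v | IsLeaf G v} :=
  fun _ _ _ _ _ hz _ hxz hyz ↦ IsLeaf.not_geodesicBtw hG hz hxz hyz

namespace IsGenPosSet

variable [Finite V] [Nontrivial V] {S : Set V}

lemma exists_isLeaf_forall_geodesicBtw (hG : G.IsTree) (hS : IsGenPosSet G S) {s : V}
    (hs : s ∈ S) : ∃ l, IsLeaf G l ∧ ∀ t ∈ S, t ≠ s → GeodesicBtw G t s l := by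
  by_cases hsingle : ∃ a ∈ S, a ≠ s
  · obtain ⟨a, ha, has⟩ := hsingle
    obtain ⟨l, hl, hasl⟩ := exists_isLeaf_geodesicBtw hG a s
    refine ⟨l, hl, fun t ht hts ↦ ?_⟩
    obtain rfl | hat := eq_or_ne a t
    · exact hasl
    · exact (hasl.left_or_right hG t).resolve_left (hS a ha t ht s hs hat has hts)
  · obtain ⟨l, hl, -⟩ := exists_isLeaf_geodesicBtw hG s s
    exact ⟨l, hl, fun t ht hts ↦ absurd ⟨t, ht, hts⟩ hsingle⟩

lemma ncard_le_ncard_setOf_isLeaf (hG : G.IsTree) (hS : IsGenPosSet G S) :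
    S.ncard ≤ {v | IsLeaf G v}.ncard := by
  choose! f hleaf hbtw using fun s (hs : s ∈ S) ↦ hS.exists_isLeaf_forall_geodesicBtw hG hs
  refine Set.ncard_le_ncard_of_injOn f hleaf (fun s hs t ht hst ↦ ?_)
  by_contra hne
  have hs_btw : GeodesicBtw G t s (f t) := hst ▸ hbtw s hs t ht (Ne.symm hne)
  exact hne ((hbtw t ht s hs hne).eq_of_swap_left hG.connected hs_btw)

end IsGenPosSet

end GeneralPosition

/-- If `T` is a finite tree with at least 2 vertices, then `gp(T)` equals the
number of leaves of `T`. -/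
theorem gp_tree_eq_card_leaves {V : Type*} [Fintype V]
    (T : SimpleGraph V) (hT : T.IsTree) (hV : 2 ≤ Fintype.card V) :
    genPosNum T = {v : V | IsLeaf T v}.ncard := by
  classical
  have : Nontrivial V := Fintype.one_lt_card_iff_nontrivial.mp hV
  refine IsGreatest.csSup_eq ⟨⟨{v | IsLeaf T v}.toFinset, ?_, ?_⟩, ?_⟩
  · rw [Set.coe_toFinset]
    exact isGenPosSet_setOf_isLeaf hT.connected
  · exact (Set.ncard_eq_toFinset_card' _).symm
  · rintro _ ⟨S, hS, rfl⟩
    rw [← Set.ncard_coe_finset]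
    exact hS.ncard_le_ncard_setOf_isLeaf hT
end

section
/- If G and H are connected graphs and (g₁,h₁), (g₂,h₂) are vertices of the Cartesian product G □ H, then the interval between them satisfies I_{G □ H}((g₁,h₁),(g₂,h₂)) = I_G(g₁,g₂) × I_H(h₁,h₂). -/
open SimpleGraph

/-- The interval between `u` and `v` in `G`: all vertices lying on a shortest
`u,v`-path. -/
def interval {V : Type*} (G : SimpleGraph V) (u v : V) : Set V :=
  {w | G.dist u v = G.dist u w + G.dist w v}

theorem mem_interval {V : Type*} {G : SimpleGraph V} {u v w : V} :
    w ∈ interval G u v ↔ G.dist u v = G.dist u w + G.dist w v :=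
  Iff.rfl

theorem dist_boxProd_of_reachable {V W : Type*} {G : SimpleGraph V} {H : SimpleGraph W}
    {x y : V × W} (hxy : (G □ H).Reachable x y) :
    (G □ H).dist x y = G.dist x.1 y.1 + H.dist x.2 y.2 := by
  obtain ⟨hG, hH⟩ := reachable_boxProd.mp hxy
  rw [← ENat.natCast_inj, ENat.natCast_add, hxy.coe_dist_eq_edist, hG.coe_dist_eq_edist,
    hH.coe_dist_eq_edist, edist_boxProd]

/-- Intervals in the Cartesian product of two connected graphs are products
of intervals in the factors. -/
theorem interval_boxProd {V W : Type*}
    (G : SimpleGraph V) (H : SimpleGraph W)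
    (hG : G.Connected) (hH : H.Connected)
    (g₁ g₂ : V) (h₁ h₂ : W) :
    interval (G □ H) (g₁, h₁) (g₂, h₂) =
      (interval G g₁ g₂) ×ˢ (interval H h₁ h₂) := by
  have dist_add (x y : V × W) : (G □ H).dist x y = G.dist x.1 y.1 + H.dist x.2 y.2 :=
    dist_boxProd_of_reachable (hG.boxProd hH x y)
  ext ⟨g, h⟩
  calc
    (g, h) ∈ interval (G □ H) (g₁, h₁) (g₂, h₂)
      ↔ G.dist g₁ g₂ + H.dist h₁ h₂ =
          (G.dist g₁ g + G.dist g g₂) + (H.dist h₁ h + H.dist h h₂) := by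
        rw [mem_interval, dist_add, dist_add, dist_add, add_add_add_comm]
    _ ↔ g ∈ interval G g₁ g₂ ∧ h ∈ interval H h₁ h₂ :=
        add_eq_add_iff_eq_and_eq hG.dist_triangle hH.dist_triangle
    _ ↔ (g, h) ∈ interval G g₁ g₂ ×ˢ interval H h₁ h₂ :=
        (Set.mem_prod (p := (g, h))).symm
end
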